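/- arXiv:2402.07825 — 2 statements merged into one kernel-verified Lean document; each statement's English description precedes it below -/
import Mathlib

section
/- Let T_1 and T_2 be two independent uniformly random spanning trees of K_n and let W = |E(T_1) ∩ E(T_2)| be the number of shared edges. Then the total variation distance between the law of W and the Poisson distribution with mean 2 is O(1/n). -/
/-!
Write `q S` for the probability that a uniform spanning tree of `K_n` contains the edge set `S`.
Exchanging an edge `e = uv` of a tree for `vw` or `uw`, according to the side of `w`, gives one new
tree for each of the `n` vertices `w` and reaches no tree more than twice. Hence
`q (S ∪ {e}) ≤ (2 / n) * q S` for `e ∉ S`, so `q S ≤ (2 / n) ^ #S`.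
The `k`-th binomial moment `E[W choose k]` is the sum of `q S ^ 2` over all
`k`-sets `S` of edges, while the sum of `q S` is exactly `(n - 1) choose k`; the bound on `q S` from
above and Cauchy-Schwarz from below give `E[W choose k] = 2 ^ k / k! * (1 + O(k ^ 2 / n))`.
The numbers `2 ^ k / k!` are the binomial moments of the Poisson law with mean `2`, and the
inclusion-exclusion formula recovers both laws from their moments with an `ℓ¹` loss of `2 ^ k`
in the `k`-th moment, which the factorial absorbs.
-/

open SimpleGraph

/-- The probability that two independent uniformly random spanning trees of
`K_n` share exactly `j` edges. -/
noncomputable def sharedEdgesPMF (n j : ℕ) : ℝ :=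
  (Nat.card {p : SimpleGraph (Fin n) × SimpleGraph (Fin n) //
      p.1.IsTree ∧ p.2.IsTree ∧ Nat.card (p.1.edgeSet ∩ p.2.edgeSet : Set (Sym2 (Fin n))) = j} : ℝ)
    / (Nat.card {T : SimpleGraph (Fin n) // T.IsTree} : ℝ) ^ 2

open Finset

section BinomialInversion

/-- `p` is the binomial inverse transform of `b`: the inclusion-exclusion formula
`p j = ∑ k, (-1) ^ (k - j) * (k choose j) * b k`, which recovers the law `p` of a random natural
number from its binomial moments `b`. The exponent is written `k + j` to avoid truncated
subtraction. -/
def IsBinomialInverse (b p : ℕ → ℝ) : Prop :=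
  ∀ j, HasSum (fun k ↦ (-1) ^ (k + j) * (k.choose j : ℝ) * b k) (p j)

theorem isBinomialInverse_iff_hasSum_add {b p : ℕ → ℝ} :
    IsBinomialInverse b p ↔
      ∀ j, HasSum (fun i ↦ (-1) ^ i * ((i + j).choose j : ℝ) * b (i + j)) (p j) := by
  refine forall_congr' fun j ↦ ?_
  have vanish : ∑ k ∈ range j, (-1) ^ (k + j) * (k.choose j : ℝ) * b k = 0 :=
    sum_eq_zero fun k hk ↦ by simp [Nat.choose_eq_zero_of_lt (mem_range.1 hk)]
  have sign (i : ℕ) : (-1 : ℝ) ^ (i + j + j) = (-1) ^ i := by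
    rw [add_assoc, pow_add, Even.neg_one_pow ⟨j, rfl⟩, mul_one]
  rw [← hasSum_nat_add_iff' j, vanish, sub_zero]
  simp only [sign]

theorem IsBinomialInverse.sub {b c p q : ℕ → ℝ} (hp : IsBinomialInverse b p)
    (hq : IsBinomialInverse c q) :
    IsBinomialInverse (fun k ↦ b k - c k) (fun j ↦ p j - q j) := fun j ↦ by
  simpa only [mul_sub] using (hp j).sub (hq j)

theorem isBinomialInverse_choose (w : ℕ) :
    IsBinomialInverse (fun k ↦ w.choose k) (fun j ↦ if w = j then 1 else 0) := by
  refine isBinomialInverse_iff_hasSum_add.2 fun j ↦ ?_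
  have factor (i : ℕ) : (-1) ^ i * ((i + j).choose j : ℝ) * w.choose (i + j) =
      w.choose j * ((-1) ^ i * (w - j).choose i) := by
    have h : (w.choose (i + j) * (i + j).choose j : ℝ) = w.choose j * (w - j).choose i := by
      have := Nat.choose_mul (n := w) (Nat.le_add_left j i)
      rw [Nat.add_sub_cancel] at this
      exact_mod_cast this
    linear_combination (-1) ^ i * h
  have alternating : ∑ i ∈ range (w - j + 1), (-1) ^ i * ((w - j).choose i : ℝ) =
      if w - j = 0 then 1 else 0 := by
    exact_mod_cast Int.alternating_sum_range_choose (n := w - j)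
  have value : (w.choose j : ℝ) * (if w - j = 0 then 1 else 0) = if w = j then 1 else 0 := by
    rcases lt_trichotomy w j with h | rfl | h
    · simp [Nat.choose_eq_zero_of_lt h, h.ne]
    · simp
    · simp [h.ne', Nat.sub_ne_zero_of_lt h]
  simp only [factor]
  rw [← value, ← alternating]
  refine (hasSum_sum_of_ne_finset_zero fun i hi ↦ ?_).mul_left _
  simp [Nat.choose_eq_zero_of_lt (show w - j < i by simpa using hi)]

theorem hasSum_pow_div_factorial (x : ℝ) : HasSum (fun k ↦ x ^ k / k.factorial) (Real.exp x) := by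
  simpa only [Real.exp_eq_exp_ℝ] using NormedSpace.expSeries_div_hasSum_exp x

theorem isBinomialInverse_poisson (r : ℝ) :
    IsBinomialInverse (fun k ↦ r ^ k / k.factorial)
      (fun j ↦ Real.exp (-r) * r ^ j / j.factorial) := by
  refine isBinomialInverse_iff_hasSum_add.2 fun j ↦ ?_
  have factor (i : ℕ) : (-1) ^ i * ((i + j).choose j : ℝ) * (r ^ (i + j) / (i + j).factorial) =
      (-r) ^ i / i.factorial * (r ^ j / j.factorial) := by
    have h := Nat.choose_pos (Nat.le_add_left j i)
    rw [← Nat.add_choose_mul_factorial_mul_factorial, neg_pow r, pow_add]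
    push_cast
    field_simp
  simp only [factor, mul_div_assoc]
  exact (hasSum_pow_div_factorial (-r)).mul_right _

theorem hasSum_choose (k : ℕ) : HasSum (fun j ↦ (k.choose j : ℝ)) (2 ^ k) := by
  have total : ∑ j ∈ range (k + 1), (k.choose j : ℝ) = 2 ^ k := by
    exact_mod_cast Nat.sum_range_choose k
  rw [← total]
  refine hasSum_sum_of_ne_finset_zero fun j hj ↦ ?_
  simp [Nat.choose_eq_zero_of_lt (show k < j by simpa using hj)]

theorem IsBinomialInverse.tsum_abs_le {b p : ℕ → ℝ} (hp : IsBinomialInverse b p)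
    (hb : Summable fun k ↦ 2 ^ k * |b k|) :
    ∑' j, |p j| ≤ ∑' k, 2 ^ k * |b k| := by
  have row (k : ℕ) : HasSum (fun j ↦ (k.choose j : ℝ) * |b k|) (2 ^ k * |b k|) :=
    (hasSum_choose k).mul_right _
  have joint : Summable (Function.uncurry fun k j : ℕ ↦ (k.choose j : ℝ) * |b k|) := by
    refine (summable_prod_of_nonneg fun x ↦ ?_).2 ⟨fun k ↦ (row k).summable, ?_⟩
    · exact mul_nonneg (Nat.cast_nonneg _) (abs_nonneg _)
    · simpa only [Function.uncurry, (row _).tsum_eq] using hb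
  have termwise (j : ℕ) : |p j| ≤ ∑' k, (k.choose j : ℝ) * |b k| := by
    have habs (k : ℕ) : ‖(-1) ^ (k + j) * (k.choose j : ℝ) * b k‖ = k.choose j * |b k| := by
      simp
    rw [← (hp j).tsum_eq, ← Real.norm_eq_abs]
    refine (norm_tsum_le_tsum_norm ?_).trans_eq (tsum_congr habs)
    simp only [habs]
    exact joint.prod_symm.prod_factor j
  have columns : Summable fun j ↦ ∑' k, (k.choose j : ℝ) * |b k| := joint.prod_symm.prod
  calc ∑' j, |p j| ≤ ∑' j, ∑' k, (k.choose j : ℝ) * |b k| :=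
        (columns.of_nonneg_of_le (fun _ ↦ abs_nonneg _) termwise).tsum_le_tsum termwise columns
    _ = ∑' k, ∑' j, (k.choose j : ℝ) * |b k| := joint.tsum_comm
    _ = ∑' k, 2 ^ k * |b k| := tsum_congr fun k ↦ (row k).tsum_eq

theorem IsBinomialInverse.tsum_abs_le_of_hasSum {b p c : ℕ → ℝ} {C : ℝ}
    (hp : IsBinomialInverse b p) (hc : HasSum c C) (hb : ∀ k, 2 ^ k * |b k| ≤ c k) :
    ∑' j, |p j| ≤ C := by
  have summable : Summable fun k ↦ 2 ^ k * |b k| :=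
    hc.summable.of_nonneg_of_le (fun k ↦ by positivity) hb
  calc ∑' j, |p j| ≤ ∑' k, 2 ^ k * |b k| := hp.tsum_abs_le summable
    _ ≤ ∑' k, c k := summable.tsum_le_tsum hb hc.summable
    _ = C := hc.tsum_eq

end BinomialInversion

section RandomSubsets

variable {α β : Type*} {s : Finset α}

/-- The `k`-th binomial moment `E[W choose k]` of `W` at a uniformly random point of `s`. -/
noncomputable def binomialMoment (s : Finset α) (W : α → ℕ) (k : ℕ) : ℝ :=
  (∑ x ∈ s, ((W x).choose k : ℝ)) / #s

theorem isBinomialInverse_binomialMoment (s : Finset α) (W : α → ℕ) :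
    IsBinomialInverse (binomialMoment s W) (fun j ↦ (#{x ∈ s | W x = j} : ℝ) / #s) := fun j ↦ by
  have h := (hasSum_sum fun x (_ : x ∈ s) ↦ isBinomialInverse_choose (W x) j).div_const (#s : ℝ)
  simpa only [binomialMoment, ← mul_sum, sum_boole, mul_div_assoc] using h

theorem binomialMoment_eq_choose {W : α → ℕ} {m : ℕ} (hs : s.Nonempty) (hW : ∀ x ∈ s, W x = m)
    (k : ℕ) : binomialMoment s W k = m.choose k := by
  have hs' : (#s : ℝ) ≠ 0 := by simpa using hs.ne_empty
  rw [binomialMoment, sum_congr rfl fun x hx ↦ by rw [hW x hx], sum_const, nsmul_eq_mul,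
    mul_div_cancel_left₀ _ hs']

variable [DecidableEq β] {E : α → Finset β} {U : Finset β}

/-- The probability that the random set `E x` contains `S`, for `x` uniformly random in `s`. -/
noncomputable def inclusionProb (s : Finset α) (E : α → Finset β) (S : Finset β) : ℝ :=
  (#{x ∈ s | S ⊆ E x} : ℝ) / #s

theorem inclusionProb_nonneg (s : Finset α) (E : α → Finset β) (S : Finset β) :
    0 ≤ inclusionProb s E S := by
  unfold inclusionProb; positivity

theorem inclusionProb_empty_le_one (s : Finset α) (E : α → Finset β) :
    inclusionProb s E ∅ ≤ 1 := by
  simpa [inclusionProb] using div_self_le_one (#s : ℝ)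

theorem inclusionProb_product_inter (s : Finset α) (E : α → Finset β) (S : Finset β) :
    inclusionProb (s ×ˢ s) (fun p ↦ E p.1 ∩ E p.2) S = inclusionProb s E S ^ 2 := by
  simp only [inclusionProb, subset_inter_iff]
  rw [filter_product (S ⊆ E ·) (S ⊆ E ·), card_product, card_product]
  push_cast
  rw [mul_div_mul_comm, sq]

theorem sum_powersetCard_inclusionProb (hE : ∀ x ∈ s, E x ⊆ U) (k : ℕ) :
    ∑ S ∈ powersetCard k U, inclusionProb s E S = binomialMoment s (fun x ↦ #(E x)) k := by
  have count (x) (hx : x ∈ s) : #{S ∈ powersetCard k U | S ⊆ E x} = (#(E x)).choose k := by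
    rw [← card_powersetCard]
    congr 1
    ext S
    simp only [mem_filter, mem_powersetCard]
    exact ⟨fun h ↦ ⟨h.2, h.1.2⟩, fun h ↦ ⟨⟨h.1.trans (hE x hx), h.2⟩, h.1⟩⟩
  have double_count : ∑ S ∈ powersetCard k U, #{x ∈ s | S ⊆ E x} =
      ∑ x ∈ s, #{S ∈ powersetCard k U | S ⊆ E x} :=
    sum_card_bipartiteAbove_eq_sum_card_bipartiteBelow _
  simp only [inclusionProb, binomialMoment, ← sum_div]
  rw [sum_congr rfl count] at double_count
  exact_mod_cast congrArg (fun m : ℕ ↦ (m : ℝ) / #s) double_count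

theorem sum_powersetCard_sq_inclusionProb (hE : ∀ x ∈ s, E x ⊆ U) (k : ℕ) :
    ∑ S ∈ powersetCard k U, inclusionProb s E S ^ 2 =
      binomialMoment (s ×ˢ s) (fun p ↦ #(E p.1 ∩ E p.2)) k := by
  simp only [← inclusionProb_product_inter]
  exact sum_powersetCard_inclusionProb
    (fun p hp ↦ inter_subset_left.trans (hE _ (mem_product.1 hp).1)) k

theorem binomialMoment_inter_le (hE : ∀ x ∈ s, E x ⊆ U) {k : ℕ} {ρ : ℝ}
    (hρ : ∀ S, #S = k → inclusionProb s E S ≤ ρ) :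
    binomialMoment (s ×ˢ s) (fun p ↦ #(E p.1 ∩ E p.2)) k ≤
      ρ * binomialMoment s (fun x ↦ #(E x)) k := by
  rw [← sum_powersetCard_sq_inclusionProb hE, ← sum_powersetCard_inclusionProb hE, mul_sum]
  refine sum_le_sum fun S hS ↦ ?_
  rw [sq]
  exact mul_le_mul_of_nonneg_right (hρ S (mem_powersetCard.1 hS).2) (inclusionProb_nonneg s E S)

theorem sq_binomialMoment_le (hE : ∀ x ∈ s, E x ⊆ U) (k : ℕ) :
    binomialMoment s (fun x ↦ #(E x)) k ^ 2 ≤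
      (#U).choose k * binomialMoment (s ×ˢ s) (fun p ↦ #(E p.1 ∩ E p.2)) k := by
  rw [← sum_powersetCard_sq_inclusionProb hE, ← sum_powersetCard_inclusionProb hE,
    ← card_powersetCard]
  exact sq_sum_le_card_mul_sum_sq

end RandomSubsets

section EdgeExchange

variable {V : Type*} {G G' T : SimpleGraph V} {u v w w' : V}

theorem reachable_left_or_right_deleteEdges (h : G.Reachable u w) (v : V) :
    (G.deleteEdges {s(u, v)}).Reachable u w ∨ (G.deleteEdges {s(u, v)}).Reachable v w := by
  classical
  obtain ⟨p, hp⟩ := h.symm.exists_isPath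
  by_cases huv : s(u, v) ∈ p.edges
  · have hv := p.snd_mem_support_of_mem_edges huv
    have hu : u ∉ (p.takeUntil v hv).support :=
      Walk.endpoint_notMem_support_takeUntil hp hv (p.adj_of_mem_edges huv).ne
    refine .inr (Reachable.symm ?_)
    exact reachable_deleteEdges_iff_exists_walk.2
      ⟨_, fun h ↦ hu (Walk.fst_mem_support_of_mem_edges _ h)⟩
  · exact .inl (reachable_deleteEdges_iff_exists_walk.2 ⟨p, huv⟩).symm

theorem sup_edge_adj (huv : u ≠ v) : (G ⊔ edge u v).Adj u v :=
  Or.inr ((edge_adj ..).2 ⟨.inl ⟨rfl, rfl⟩, huv⟩)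

theorem exists_isPath_snd_eq_of_sup_edge (hv : ¬ G.Reachable u v) (hw : G.Reachable u w) :
    ∃ p : (G ⊔ edge v w).Walk v u, p.IsPath ∧ p.snd = w := by
  classical
  obtain ⟨q, hq⟩ := hw.symm.exists_isPath
  have hvq : v ∉ q.support := fun h ↦ hv (hw.trans (q.takeUntil v h).reachable)
  have hvw : v ≠ w := by rintro rfl; exact hv hw
  refine ⟨.cons (sup_edge_adj hvw) (q.mapLe le_sup_left), ?_, by simp⟩
  exact (Walk.cons_isPath_iff ..).2 ⟨hq.mapLe _, by simpa using hvq⟩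

/-- The vertex `w` is read off `G ⊔ edge v w` as the first step on the path from `v` to `u`. -/
theorem eq_and_eq_of_sup_edge_eq_sup_edge (hG : G.IsAcyclic) (hv : ¬ G.Reachable u v)
    (hv' : ¬ G'.Reachable u v) (hw : G.Reachable u w) (hw' : G'.Reachable u w')
    (h : G ⊔ edge v w = G' ⊔ edge v w') : G = G' ∧ w = w' := by
  have not_adj : ¬ G.Adj v w := fun hvw ↦ hv (hw.trans hvw.reachable.symm)
  have acyclic : (G ⊔ edge v w).IsAcyclic :=
    hG.sup_edge_of_not_reachable fun hvw ↦ hv (hw.trans hvw.symm)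
  obtain rfl : w = w' := by
    have hpath' := exists_isPath_snd_eq_of_sup_edge hv' hw'
    rw [← h] at hpath'
    obtain ⟨p, hp, hpw⟩ := exists_isPath_snd_eq_of_sup_edge hv hw
    obtain ⟨p', hp', hpw'⟩ := hpath'
    have hpp' : (⟨p, hp⟩ : (G ⊔ edge v w).Path v u) = ⟨p', hp'⟩ :=
      (acyclic.subsingleton_path v u).elim _ _
    rw [← hpw, ← hpw', Subtype.mk.inj hpp']
  have not_adj' : ¬ G'.Adj v w := fun hvw ↦ hv' (hw'.trans hvw.reachable.symm)
  refine ⟨?_, rfl⟩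
  rw [← sdiff_edge G not_adj, ← sdiff_edge G' not_adj', ← sup_sdiff_right_self, h,
    sup_sdiff_right_self]

/-- The graph `G` with the edge `uv` replaced by the edge `vw`. This turns a tree into a tree when
`w` lies on the side of `u` after the removal of `uv`. -/
def exchangeEdge (G : SimpleGraph V) (u v w : V) : SimpleGraph V :=
  G.deleteEdges {s(u, v)} ⊔ edge v w

theorem not_reachable_deleteEdges_of_isAcyclic (hG : G.IsAcyclic) (huv : G.Adj u v) :
    ¬ (G.deleteEdges {s(u, v)}).Reachable u v :=
  isBridge_iff.1 (isAcyclic_iff_forall_adj_isBridge.1 hG huv)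

theorem isTree_exchangeEdge (hT : T.IsTree) (huv : T.Adj u v)
    (hw : (T.deleteEdges {s(u, v)}).Reachable u w) : (exchangeEdge T u v w).IsTree := by
  have separated : ¬ (T.deleteEdges {s(u, v)}).Reachable v w := fun h ↦
    not_reachable_deleteEdges_of_isAcyclic hT.isAcyclic huv (hw.trans h.symm)
  have hle : T.deleteEdges {s(u, v)} ≤ exchangeEdge T u v w := le_sup_left
  have hvw : v ≠ w := by rintro rfl; exact separated (.refl _)
  have reach_u : (exchangeEdge T u v w).Reachable v u :=
    (sup_edge_adj hvw).reachable.trans (hw.mono hle).symm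
  refine ⟨(connected_iff_exists_forall_reachable _).2 ⟨v, fun x ↦ ?_⟩,
    (hT.isAcyclic.anti (deleteEdges_le _)).sup_edge_of_not_reachable separated⟩
  exact (reachable_left_or_right_deleteEdges (hT.connected.preconnected u x) v).elim
    (fun h ↦ reach_u.trans (h.mono hle)) (fun h ↦ h.mono hle)

theorem deleteEdges_sup_edge (huv : T.Adj u v) : T.deleteEdges {s(u, v)} ⊔ edge u v = T :=
  sdiff_sup_cancel ((edge_le_iff _).2 (.inr huv))

theorem exchangeEdge_injOn (u v : V) :
    Set.InjOn (fun p : SimpleGraph V × V ↦ exchangeEdge p.1 u v p.2)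
      {p | p.1.IsTree ∧ p.1.Adj u v ∧ (p.1.deleteEdges {s(u, v)}).Reachable u p.2} := by
  rintro ⟨T, w⟩ ⟨hT, huv, hw⟩ ⟨T', w'⟩ ⟨hT', huv', hw'⟩ h
  obtain ⟨hdel, rfl⟩ := eq_and_eq_of_sup_edge_eq_sup_edge
    (hT.isAcyclic.anti (deleteEdges_le _)) (not_reachable_deleteEdges_of_isAcyclic hT.isAcyclic huv)
    (not_reachable_deleteEdges_of_isAcyclic hT'.isAcyclic huv') hw hw' h
  have hTT' : T = T' := (deleteEdges_sup_edge huv).symm.trans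
    ((congrArg (· ⊔ edge u v) hdel).trans (deleteEdges_sup_edge huv'))
  rw [hTT']

end EdgeExchange

section Estimates

theorem one_sub_mul_sq_le_sq_choose {n : ℕ} (hn : 1 ≤ n) (k : ℕ) :
    (1 - 2 * k ^ 2 / n) * ((n : ℝ) ^ k / k.factorial) ^ 2 ≤ ((n - 1).choose k : ℝ) ^ 2 := by
  have hn' : (1 : ℝ) ≤ n := by exact_mod_cast hn
  rcases lt_or_ge n k with hk | hk
  · have hk' : (n : ℝ) ≤ k := by exact_mod_cast hk.le
    have : 1 - 2 * (k : ℝ) ^ 2 / n ≤ 0 := by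
      rw [sub_nonpos, one_le_div (by positivity)]
      nlinarith
    exact (mul_nonpos_of_nonpos_of_nonneg this (sq_nonneg _)).trans (sq_nonneg _)
  · have hk' : (k : ℝ) / n ≤ 1 := (div_le_one (by positivity)).2 (by exact_mod_cast hk)
    have bernoulli : 1 - 2 * (k : ℝ) ^ 2 / n ≤ ((1 - k / n) ^ k) ^ 2 := by
      have := one_add_mul_le_pow (a := -(k / n : ℝ)) (by linarith) (k * 2)
      rw [← pow_mul]
      refine le_of_eq_of_le ?_ (this.trans_eq (by ring))
      push_cast
      ring
    have choose_ge : (1 - k / n) ^ k * ((n : ℝ) ^ k / k.factorial) ≤ (n - 1).choose k := by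
      have h := Nat.pow_le_choose (α := ℝ) k (n - 1)
      rw [Nat.sub_add_cancel hn, Nat.cast_sub hk] at h
      refine le_of_eq_of_le ?_ h
      rw [mul_div_assoc', ← mul_pow, sub_mul, one_mul, div_mul_cancel₀ _ (by positivity)]
    have hnonneg : 0 ≤ (1 - k / n) ^ k * ((n : ℝ) ^ k / k.factorial) :=
      mul_nonneg (pow_nonneg (by linarith) _) (by positivity)
    calc (1 - 2 * k ^ 2 / n) * ((n : ℝ) ^ k / k.factorial) ^ 2
        ≤ ((1 - k / n) ^ k) ^ 2 * ((n : ℝ) ^ k / k.factorial) ^ 2 := by gcongr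
      _ = ((1 - k / n) ^ k * ((n : ℝ) ^ k / k.factorial)) ^ 2 := (mul_pow ..).symm
      _ ≤ ((n - 1).choose k : ℝ) ^ 2 := pow_le_pow_left₀ hnonneg choose_ge 2

theorem choose_choose_two_le (n k : ℕ) :
    ((n.choose 2).choose k : ℝ) ≤ ((n : ℝ) ^ 2 / 2) ^ k / k.factorial := by
  have choose_two_le : (n.choose 2 : ℝ) ≤ n ^ 2 / 2 := by
    simpa using Nat.choose_le_pow_div (α := ℝ) 2 n
  exact (Nat.choose_le_pow_div k _).trans (by gcongr)

end Estimates

section SpanningTrees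

section Finite

variable {V : Type*} [Finite V]

/-- The edges of `G` as a finset. Unlike `SimpleGraph.edgeFinset` it needs no decidability of
adjacency, so it can be used for a random graph `G`. -/
noncomputable def edges (G : SimpleGraph V) : Finset (Sym2 V) :=
  (Set.toFinite G.edgeSet).toFinset

theorem mem_edges {G : SimpleGraph V} {e : Sym2 V} : e ∈ edges G ↔ e ∈ G.edgeSet :=
  Set.Finite.mem_toFinset _

theorem edges_mono {G H : SimpleGraph V} (h : G ≤ H) : edges G ⊆ edges H :=
  Set.Finite.toFinset_mono (edgeSet_mono h)

variable (V) in
/-- The set of spanning trees of the complete graph on `V`. -/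
noncomputable def spanningTrees : Finset (SimpleGraph V) :=
  (Set.toFinite {T | T.IsTree}).toFinset

theorem mem_spanningTrees {T : SimpleGraph V} : T ∈ spanningTrees V ↔ T.IsTree :=
  Set.Finite.mem_toFinset _

theorem spanningTrees_nonempty [Nonempty V] : (spanningTrees V).Nonempty := by
  obtain ⟨T, -, hT⟩ := (connected_top (V := V)).exists_isTree_le
  exact ⟨T, mem_spanningTrees.2 hT⟩

end Finite

variable {V : Type*} [Fintype V]

theorem card_edges_top : #(edges (⊤ : SimpleGraph V)) = (Fintype.card V).choose 2 := by
  classical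
  rw [edges, Set.Finite.toFinset_eq_toFinset]
  exact card_edgeFinset_top_eq_card_choose_two

theorem card_edges_of_mem_spanningTrees {T : SimpleGraph V} (hT : T ∈ spanningTrees V) :
    #(edges T) = Fintype.card V - 1 := by
  classical
  rw [edges, Set.Finite.toFinset_eq_toFinset]
  change #T.edgeFinset = _
  rw [← (mem_spanningTrees.1 hT).card_edgeFinset, Nat.add_sub_cancel]

variable [DecidableEq V] {S : Finset (Sym2 V)} {u v : V}

open Classical in
theorem card_spanningTrees_insert_reachable_le (hS : s(u, v) ∉ S) :
    #{p ∈ {T ∈ spanningTrees V | insert s(u, v) S ⊆ edges T} ×ˢ (univ : Finset V) |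
        (p.1.deleteEdges {s(u, v)}).Reachable u p.2} ≤
      #{T ∈ spanningTrees V | S ⊆ edges T} := by
  refine card_le_card_of_injOn (fun p ↦ exchangeEdge p.1 u v p.2) ?_
    ((exchangeEdge_injOn u v).mono ?_)
  · rintro ⟨T, w⟩ h
    obtain ⟨⟨hT, huv, hST⟩, hw⟩ : (T.IsTree ∧ T.Adj u v ∧ S ⊆ edges T) ∧
        (T.deleteEdges {s(u, v)}).Reachable u w := by
      simpa [mem_spanningTrees, mem_edges, insert_subset_iff] using h
    refine mem_coe.2 (mem_filter.2 ⟨mem_spanningTrees.2 (isTree_exchangeEdge hT huv hw), ?_⟩)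
    intro e he
    have hle : T.deleteEdges {s(u, v)} ≤ exchangeEdge T u v w := le_sup_left
    refine edges_mono hle ?_
    simpa [mem_edges] using ⟨mem_edges.1 (hST he), fun h ↦ hS (h ▸ he)⟩
  · rintro ⟨T, w⟩ h
    simp_all [mem_spanningTrees, mem_edges, insert_subset_iff]

theorem card_mul_card_spanningTrees_insert_le {e : Sym2 V} (he : e ∉ S) :
    Fintype.card V * #{T ∈ spanningTrees V | insert e S ⊆ edges T} ≤
      2 * #{T ∈ spanningTrees V | S ⊆ edges T} := by
  classical
  induction e with | _ u v
  have he' : s(v, u) ∉ S := Sym2.eq_swap (a := u) ▸ he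
  have left := card_spanningTrees_insert_reachable_le he
  have right := card_spanningTrees_insert_reachable_le he'
  rw [Sym2.eq_swap] at right
  rw [mul_comm, ← card_univ, ← card_product, two_mul]
  refine le_trans ?_ (add_le_add left right)
  refine le_trans (card_le_card fun p hp ↦ ?_) (card_union_le _ _)
  have hT := mem_spanningTrees.1 (mem_filter.1 (mem_product.1 hp).1).1
  rw [mem_union, mem_filter, mem_filter]
  exact (reachable_left_or_right_deleteEdges (hT.connected.preconnected u p.2) v).imp
    (fun h ↦ ⟨hp, h⟩) (fun h ↦ ⟨hp, h⟩)

theorem inclusionProb_spanningTrees_le [Nonempty V] (S : Finset (Sym2 V)) :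
    inclusionProb (spanningTrees V) edges S ≤ (2 / Fintype.card V) ^ #S := by
  induction S using Finset.induction with
  | empty => simpa using inclusionProb_empty_le_one (spanningTrees V) _
  | insert e S he ih =>
    have exchange : (Fintype.card V : ℝ) * #{T ∈ spanningTrees V | insert e S ⊆ edges T} ≤
        2 * #{T ∈ spanningTrees V | S ⊆ edges T} := by
      exact_mod_cast card_mul_card_spanningTrees_insert_le he
    have hn : (0 : ℝ) < Fintype.card V := by exact_mod_cast Fintype.card_pos
    calc inclusionProb (spanningTrees V) edges (insert e S)
        ≤ 2 / Fintype.card V * inclusionProb (spanningTrees V) edges S := by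
          rw [inclusionProb, inclusionProb, ← mul_div_assoc]
          refine div_le_div_of_nonneg_right ?_ (Nat.cast_nonneg _)
          rw [div_mul_eq_mul_div, le_div_iff₀' hn]
          exact exchange
      _ ≤ 2 / Fintype.card V * (2 / Fintype.card V) ^ #S :=
          mul_le_mul_of_nonneg_left ih (by positivity)
      _ = (2 / Fintype.card V) ^ #(insert e S) := by rw [card_insert_of_notMem he, pow_succ']

variable (V) in
/-- The `k`-th binomial moment of the number of edges shared by two independent uniformly random
spanning trees of the complete graph on `V`. -/
noncomputable def sharedEdgesMoment (k : ℕ) : ℝ :=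
  binomialMoment (spanningTrees V ×ˢ spanningTrees V) (fun p ↦ #(edges p.1 ∩ edges p.2)) k

theorem sharedEdgesMoment_le [Nonempty V] (k : ℕ) :
    sharedEdgesMoment V k ≤ 2 ^ k / k.factorial := by
  have hn : (Fintype.card V : ℝ) ≠ 0 := by exact_mod_cast Fintype.card_ne_zero
  have choose_le : ((Fintype.card V - 1).choose k : ℝ) ≤ (Fintype.card V : ℝ) ^ k / k.factorial :=
    calc ((Fintype.card V - 1).choose k : ℝ) ≤ (Fintype.card V).choose k := by
          exact_mod_cast Nat.choose_le_choose k (Nat.sub_le _ _)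
      _ ≤ (Fintype.card V : ℝ) ^ k / k.factorial := Nat.choose_le_pow_div k _
  unfold sharedEdgesMoment
  calc binomialMoment _ _ k
      ≤ (2 / Fintype.card V) ^ k * binomialMoment (spanningTrees V) (fun T ↦ #(edges T)) k :=
        binomialMoment_inter_le (fun _ _ ↦ edges_mono le_top)
          fun S hS ↦ hS ▸ inclusionProb_spanningTrees_le S
    _ = (2 / Fintype.card V) ^ k * (Fintype.card V - 1).choose k := by
        rw [binomialMoment_eq_choose spanningTrees_nonempty
          fun T hT ↦ card_edges_of_mem_spanningTrees hT]
    _ ≤ (2 / Fintype.card V) ^ k * ((Fintype.card V : ℝ) ^ k / k.factorial) := by gcongr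
    _ = 2 ^ k / k.factorial := by
        rw [mul_div_assoc', ← mul_pow, div_mul_cancel₀ _ hn]

theorem le_sharedEdgesMoment [Nonempty V] (k : ℕ) :
    2 ^ k / k.factorial * (1 - 2 * k ^ 2 / Fintype.card V) ≤ sharedEdgesMoment V k := by
  set A : ℝ := ((Fintype.card V : ℝ) ^ 2 / 2) ^ k / k.factorial with hA
  have hA_pos : 0 < A := by positivity
  have moment_nonneg : 0 ≤ sharedEdgesMoment V k := by
    unfold sharedEdgesMoment binomialMoment; positivity
  have cauchy_schwarz : ((Fintype.card V - 1).choose k : ℝ) ^ 2 ≤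
      ((Fintype.card V).choose 2).choose k * sharedEdgesMoment V k := by
    have h := sq_binomialMoment_le (s := spanningTrees V) (E := edges)
      (fun _ _ ↦ edges_mono le_top) k
    rwa [binomialMoment_eq_choose spanningTrees_nonempty
      fun T hT ↦ card_edges_of_mem_spanningTrees hT, card_edges_top] at h
  refine le_of_mul_le_mul_left ?_ hA_pos
  calc A * (2 ^ k / k.factorial * (1 - 2 * k ^ 2 / Fintype.card V))
      = (1 - 2 * k ^ 2 / Fintype.card V) * ((Fintype.card V : ℝ) ^ k / k.factorial) ^ 2 := by
        rw [hA, div_pow]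
        field_simp
        ring
    _ ≤ ((Fintype.card V - 1).choose k : ℝ) ^ 2 :=
        one_sub_mul_sq_le_sq_choose Fintype.card_pos k
    _ ≤ ((Fintype.card V).choose 2).choose k * sharedEdgesMoment V k := cauchy_schwarz
    _ ≤ A * sharedEdgesMoment V k :=
        mul_le_mul_of_nonneg_right (choose_choose_two_le _ k) moment_nonneg

theorem two_pow_mul_abs_sharedEdgesMoment_sub_le [Nonempty V] (k : ℕ) :
    2 ^ k * |sharedEdgesMoment V k - 2 ^ k / k.factorial| ≤
      16 ^ k / k.factorial * (2 / Fintype.card V) := by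
  have hk : (k : ℝ) ^ 2 ≤ 4 ^ k := by
    have : k ^ 2 ≤ 4 ^ k := by
      calc k ^ 2 ≤ (2 ^ k) ^ 2 := by gcongr; exact Nat.lt_two_pow_self.le
        _ = 4 ^ k := by rw [← pow_mul, mul_comm, pow_mul]; norm_num
    exact_mod_cast this
  calc 2 ^ k * |sharedEdgesMoment V k - 2 ^ k / k.factorial|
      ≤ 2 ^ k * (2 ^ k / k.factorial * (2 * k ^ 2 / Fintype.card V)) := by
        gcongr
        rw [abs_sub_comm, abs_of_nonneg (sub_nonneg.2 (sharedEdgesMoment_le k))]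
        linarith [le_sharedEdgesMoment (V := V) k]
    _ ≤ 2 ^ k * (2 ^ k / k.factorial * (2 * 4 ^ k / Fintype.card V)) := by gcongr
    _ = 16 ^ k / k.factorial * (2 / Fintype.card V) := by
        rw [show (16 : ℝ) = 2 * 2 * 4 by norm_num, mul_pow, mul_pow]
        ring

theorem sharedEdgesPMF_eq (n j : ℕ) :
    sharedEdgesPMF n j =
      (#{p ∈ spanningTrees (Fin n) ×ˢ spanningTrees (Fin n) | #(edges p.1 ∩ edges p.2) = j} : ℝ) /
        #(spanningTrees (Fin n) ×ˢ spanningTrees (Fin n)) := by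
  have shared (T T' : SimpleGraph (Fin n)) :
      Nat.card (T.edgeSet ∩ T'.edgeSet : Set (Sym2 (Fin n))) = #(edges T ∩ edges T') :=
    Nat.subtype_card _ fun e ↦ by rw [mem_inter, mem_edges, mem_edges, Set.mem_inter_iff]
  rw [sharedEdgesPMF, card_product, Nat.cast_mul, ← sq,
    Nat.subtype_card (spanningTrees (Fin n)) fun T ↦ mem_spanningTrees]
  congr 2
  refine Nat.subtype_card _ fun p ↦ ?_
  rw [mem_filter, mem_product, mem_spanningTrees, mem_spanningTrees, shared, and_assoc]

end SpanningTrees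

/-- If `W` is the number of edges shared by two independent uniformly random
spanning trees of `K_n`, then the total variation distance between the law of
`W` and the Poisson distribution with mean `2` is `O(1/n)`. -/
theorem tv_dist_shared_edges_poisson :
    ∃ C : ℝ, 0 < C ∧ ∀ n : ℕ, 1 ≤ n →
      (1 / 2) * ∑' j : ℕ,
          |sharedEdgesPMF n j - Real.exp (-2) * 2 ^ j / (Nat.factorial j)|
        ≤ C / n := by
  refine ⟨Real.exp 16, Real.exp_pos _, fun n hn ↦ ?_⟩
  have : NeZero n := ⟨by lia⟩
  have inverse : IsBinomialInverse (fun k ↦ sharedEdgesMoment (Fin n) k - 2 ^ k / k.factorial)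
      (fun j ↦ sharedEdgesPMF n j - Real.exp (-2) * 2 ^ j / j.factorial) := by
    simp only [sharedEdgesPMF_eq]
    exact (isBinomialInverse_binomialMoment _ _).sub (isBinomialInverse_poisson 2)
  have bound (k : ℕ) : 2 ^ k * |sharedEdgesMoment (Fin n) k - 2 ^ k / k.factorial| ≤
      16 ^ k / k.factorial * (2 / n) := by
    simpa only [Fintype.card_fin] using two_pow_mul_abs_sharedEdgesMoment_sub_le (V := Fin n) k
  have total : HasSum (fun k : ℕ ↦ (16 : ℝ) ^ k / k.factorial * (2 / n)) (Real.exp 16 * (2 / n)) :=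
    (hasSum_pow_div_factorial 16).mul_right _
  calc _ ≤ 1 / 2 * (Real.exp 16 * (2 / n)) :=
        mul_le_mul_of_nonneg_left (inverse.tsum_abs_le_of_hasSum total bound) one_half_pos.le
    _ = Real.exp 16 / n := by ring
end

section
/- Let π, π' be two independent uniformly random Hamiltonian cycles on K_n. Then the number of common edges |E(π) ∩ E(π')| converges in distribution to Poisson(2) as n → ∞. -/
open SimpleGraph Filter

/-- A Hamiltonian cycle of `K_n`, viewed as a subgraph: a connected
2-regular graph on the vertex set `Fin n`. -/
def IsHamCycleGraph (n : ℕ) (H : SimpleGraph (Fin n)) : Prop :=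
  H.Connected ∧ ∀ v : Fin n, Nat.card (H.neighborSet v) = 2

/-!
Fix a `d`-regular graph `G` and an `e`-regular graph `H` on `N` vertices, relabel `H` by a
uniformly random permutation `σ`, and let `p m` be the probability that exactly `m` edges become
common. Let `vw` be an edge of `G`. Exchanging the labels of `w` and another vertex `q` matches
the `σ` for which `vw` is common and there are `m + 1` common edges with those for which `vq` is
an edge of the relabelled `H` and there are `m` common edges, up to a proportion `O(1 / N)`.
Summing over the `q` and then over the edges `vw` gives
`(m + 1) * p (m + 1) - d * e / 2 * p m → 0`. The expected number of common edges is bounded, so no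
mass escapes and this recurrence forces `p` to converge to the Poisson distribution with
parameter `d * e / 2`. All bounds are uniform in `G` and `H`, so one may average over pairs
`(G, H)` from classes of graphs, the second of which is closed under relabelling.
Hamiltonian cycles are the case `d = e = 2`.
-/

namespace GraphOverlap

open Equiv Finset

lemma abs_card_filter_sub_card_filter_le {α : Type*} {s : Finset α} {P Q R : α → Prop}
    [DecidablePred P] [DecidablePred Q] [DecidablePred R]
    (h : ∀ a ∈ s, ¬ R a → (P a ↔ Q a)) :
    |(#{a ∈ s | P a} : ℝ) - #{a ∈ s | Q a}| ≤ #{a ∈ s | R a} := by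
  have hle {P Q : α → Prop} [DecidablePred P] [DecidablePred Q]
      (h : ∀ a ∈ s, ¬ R a → P a → Q a) :
      (#{a ∈ s | P a} : ℝ) ≤ #{a ∈ s | R a} + #{a ∈ s | Q a} := by
    classical
    rw [← Nat.cast_add, Nat.cast_le]
    refine (card_le_card fun a ha => ?_).trans (card_union_le _ _)
    grind
  rw [abs_sub_le_iff, sub_le_iff_le_add, sub_le_iff_le_add]
  exact ⟨hle fun a ha hR => (h a ha hR).1, hle fun a ha hR => (h a ha hR).2⟩

/-- The number of edges that `G` shares with the relabelled graph `H.comap σ`, in which `v` and `w`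
are adjacent iff `σ v` and `σ w` are adjacent in `H`. -/
noncomputable def overlap {V : Type*} (G H : SimpleGraph V) (σ : Perm V) : ℕ :=
  (G.edgeSet ∩ (H.comap σ).edgeSet).ncard

section Counting

variable {V : Type*} [Fintype V] {H : SimpleGraph V} [DecidableRel H.Adj] {e : ℕ}

lemma card_filter_adj_perm (hH : H.IsRegularOfDegree e) (σ : Perm V) (v : V) :
    #{w | H.Adj (σ v) (σ w)} = e := by
  rw [← hH (σ v), ← card_neighborFinset_eq_degree, neighborFinset_eq_filter]
  exact card_equiv σ (by simp)

lemma sum_card_filter_adj_perm (hH : H.IsRegularOfDegree e) (D : Finset (Perm V)) (v : V) :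
    ∑ w, #{σ ∈ D | H.Adj (σ v) (σ w)} = e * #D := by
  have h := sum_card_bipartiteAbove_eq_sum_card_bipartiteBelow (s := D) (t := univ)
    (fun σ w => H.Adj (σ v) (σ w))
  simp only [bipartiteAbove, bipartiteBelow, card_filter_adj_perm hH, sum_const, smul_eq_mul] at h
  rw [← h, mul_comm]

variable [DecidableEq V]

lemma sum_erase_card_filter_adj_perm_and (hH : H.IsRegularOfDegree e) (P : Perm V → Prop)
    [DecidablePred P] (v : V) :
    ∑ w ∈ univ.erase v, #{σ : Perm V | H.Adj (σ v) (σ w) ∧ P σ} = e * #{σ : Perm V | P σ} := by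
  rw [sum_erase univ (by simp), ← sum_card_filter_adj_perm hH _ v]
  simp only [filter_filter, and_comm]

lemma card_filter_adj_perm_and_eq_of_swap (P : Perm V → Prop) [DecidablePred P] {v w z : V}
    (hvw : v ≠ w) (hvz : v ≠ z) :
    #{σ : Perm V | H.Adj (σ v) (σ w) ∧ P σ} =
      #{σ : Perm V | H.Adj (σ v) (σ z) ∧ P (σ * swap w z)} := by
  refine card_equiv (Equiv.mulRight (swap w z)) fun σ => ?_
  simp [swap_apply_of_ne_of_ne hvw hvz, mul_assoc]

-- Multiplying `σ` by `swap w z` turns the edge `vw` into `vz`, and each `σ` has `e` edges at `v`.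
lemma card_mul_card_filter_adj_perm_le (hH : H.IsRegularOfDegree e) {P : Perm V → Prop}
    [DecidablePred P] {v w : V} (hvw : v ≠ w) {Z : Finset V} (hvZ : v ∉ Z)
    (hP : ∀ z ∈ Z, ∀ σ, P (σ * swap w z) ↔ P σ) :
    #Z * #{σ : Perm V | H.Adj (σ v) (σ w) ∧ P σ} ≤ e * #{σ : Perm V | P σ} := by
  calc #Z * #{σ : Perm V | H.Adj (σ v) (σ w) ∧ P σ}
      = ∑ z ∈ Z, #{σ ∈ {σ : Perm V | P σ} | H.Adj (σ v) (σ z)} := by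
        rw [← smul_eq_mul, ← sum_const]
        refine sum_congr rfl fun z hz => ?_
        rw [card_filter_adj_perm_and_eq_of_swap P hvw (ne_of_mem_of_not_mem hz hvZ).symm,
          filter_filter]
        simp only [hP z hz, and_comm]
    _ ≤ ∑ z, #{σ ∈ {σ : Perm V | P σ} | H.Adj (σ v) (σ z)} :=
        sum_le_sum_of_subset (subset_univ Z)
    _ = e * #{σ : Perm V | P σ} := sum_card_filter_adj_perm hH _ v

lemma card_filter_adj_perm_le (hH : H.IsRegularOfDegree e) {v w : V} (hvw : v ≠ w) :
    (Fintype.card V - 1) * #{σ : Perm V | H.Adj (σ v) (σ w)} ≤ e * Fintype.card (Perm V) := by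
  have h := card_mul_card_filter_adj_perm_le hH (P := fun _ => True) hvw (Z := {v}ᶜ)
    (by simp) (by simp)
  simpa [card_compl] using h

lemma card_filter_adj_perm_and_adj_perm_le (hH : H.IsRegularOfDegree e) {v w x y : V}
    (hne : s(x, y) ≠ s(v, w)) :
    (Fintype.card V - 3) * #{σ : Perm V | H.Adj (σ v) (σ w) ∧ H.Adj (σ x) (σ y)} ≤
      e * #{σ : Perm V | H.Adj (σ v) (σ w)} := by
  wlog hy : y ≠ v ∧ y ≠ w generalizing x y
  · rcases eq_or_ne x y with rfl | hxy
    · simp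
    rcases eq_or_ne v w with rfl | _
    · simp
    have hx : x ≠ v ∧ x ≠ w := by grind
    simpa only [H.adj_comm (_ : V) (_ : V)] using this (Sym2.eq_swap ▸ hne) hx
  rcases eq_or_ne x y with rfl | hxy
  · simp
  calc (Fintype.card V - 3) * #{σ : Perm V | H.Adj (σ v) (σ w) ∧ H.Adj (σ x) (σ y)}
      ≤ #({x, v, w}ᶜ : Finset V) * #{σ : Perm V | H.Adj (σ x) (σ y) ∧ H.Adj (σ v) (σ w)} := by
        rw [card_compl]
        simp only [and_comm]
        gcongr
        exact card_le_three
    _ ≤ e * #{σ : Perm V | H.Adj (σ v) (σ w)} := by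
        refine card_mul_card_filter_adj_perm_le hH hxy (by simp) fun z hz σ => ?_
        simp only [mem_compl, mem_insert, mem_singleton, not_or] at hz
        rw [Perm.mul_apply, Perm.mul_apply, swap_apply_of_ne_of_ne hy.1.symm (Ne.symm hz.2.1),
          swap_apply_of_ne_of_ne hy.2.symm (Ne.symm hz.2.2)]

end Counting

section Switching

variable {V : Type*} {G H : SimpleGraph V} {v w q : V} {σ : Perm V}

/-- The event that `H.comap σ` has an edge, other than `s(v, q)`, between `{w, q}` and a
`G`-neighbour of `w` or `q`. Outside it, exchanging the labels of `w` and `q` turns the edge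
`s(v, q)` of `H.comap σ` into `s(v, w)` and affects no other edge shared with `G`. -/
def SwitchObstructed (G H : SimpleGraph V) (v w q : V) (σ : Perm V) : Prop :=
  ∃ x y, (x = w ∨ x = q) ∧ (G.Adj w y ∨ G.Adj q y) ∧ s(x, y) ≠ s(v, q) ∧ H.Adj (σ x) (σ y)

lemma not_inf_comap_adj_of_not_switchObstructed (hvq : ¬ G.Adj v q)
    (hσ : ¬ SwitchObstructed G H v w q σ) {x y : V} (hx : x = w ∨ x = q) :
    ¬ (G ⊓ H.comap σ).Adj x y := by
  rintro ⟨hG, hH⟩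
  refine hσ ⟨x, y, hx, by grind, fun h => hvq ?_, hH⟩
  rwa [← mem_edgeSet, ← h]

variable [DecidableEq V]

lemma inf_comap_mul_swap_adj_iff (hvw : G.Adj v w) (hvq : v ≠ q) (hGvq : ¬ G.Adj v q)
    (hH : H.Adj (σ v) (σ q)) (hσ : ¬ SwitchObstructed G H v w q σ) {x y : V}
    (hx : x = w ∨ x = q) :
    (G ⊓ H.comap (σ * swap w q)).Adj x y ↔ s(x, y) = s(v, w) := by
  have hwq : w ≠ q := by rintro rfl; exact hGvq hvw
  have hunique {a b : V} (ha : a = w ∨ a = q) (hb : G.Adj w b ∨ G.Adj q b)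
      (hab : H.Adj (σ a) (σ b)) : s(a, b) = s(v, q) :=
    by_contra fun hne => hσ ⟨a, b, ha, hb, hne, hab⟩
  have hwq_ne : s(w, q) ≠ s(v, q) := by simp [hvw.ne', hwq]
  constructor
  · rintro ⟨hG, hH'⟩
    rw [comap_adj, Perm.mul_apply, Perm.mul_apply] at hH'
    rcases hx with rfl | rfl
    · rcases eq_or_ne y q with rfl | hyq
      · rw [swap_apply_left, swap_apply_right] at hH'
        exact absurd (hunique (.inl rfl) (.inl hG) hH'.symm) hwq_ne
      · rw [swap_apply_left, swap_apply_of_ne_of_ne hG.ne' hyq] at hH'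
        have hy := hunique (.inr rfl) (.inl hG) hH'
        rw [Sym2.congr_right.1 (hy.trans Sym2.eq_swap), Sym2.eq_swap]
    · rcases eq_or_ne y w with rfl | hyw
      · rw [swap_apply_left, swap_apply_right] at hH'
        exact absurd (hunique (.inl rfl) (.inl hG.symm) hH') hwq_ne
      · rw [swap_apply_right, swap_apply_of_ne_of_ne hyw hG.ne'] at hH'
        have hy := hunique (.inl rfl) (.inr hG) hH'
        simp [hvw.ne', hwq] at hy
  · intro h
    rw [← mem_edgeSet, h, mem_edgeSet]
    refine ⟨hvw, ?_⟩
    simpa [swap_apply_of_ne_of_ne hvw.ne hvq] using hH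

lemma inf_comap_mul_swap (hvw : G.Adj v w) (hvq : v ≠ q) (hGvq : ¬ G.Adj v q)
    (hH : H.Adj (σ v) (σ q)) (hσ : ¬ SwitchObstructed G H v w q σ) :
    G ⊓ H.comap (σ * swap w q) = G ⊓ H.comap σ ⊔ edge v w := by
  ext x y
  by_cases hx : x = w ∨ x = q
  · have := inf_comap_mul_swap_adj_iff hvw hvq hGvq hH hσ (y := y) hx
    have := not_inf_comap_adj_of_not_switchObstructed hGvq hσ (y := y) hx
    grind [Adj.ne]
  by_cases hy : y = w ∨ y = q
  · have := inf_comap_mul_swap_adj_iff hvw hvq hGvq hH hσ (y := x) hy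
    have := not_inf_comap_adj_of_not_switchObstructed hGvq hσ (y := x) hy
    grind [Adj.ne, adj_comm]
  · push Not at hx hy
    simp [swap_apply_of_ne_of_ne hx.1 hx.2, swap_apply_of_ne_of_ne hy.1 hy.2, edge_adj, hx.1, hy.1]

lemma overlap_mul_swap [Finite V] (hvw : G.Adj v w) (hvq : v ≠ q) (hGvq : ¬ G.Adj v q)
    (hH : H.Adj (σ v) (σ q)) (hσ : ¬ SwitchObstructed G H v w q σ) :
    overlap G H (σ * swap w q) = overlap G H σ + 1 := by
  have hnew : s(v, w) ∉ (G ⊓ H.comap σ).edgeSet := fun h =>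
    not_inf_comap_adj_of_not_switchObstructed hGvq hσ (.inl rfl) (Adj.symm h)
  rw [overlap, overlap, ← edgeSet_inf, ← edgeSet_inf, inf_comap_mul_swap hvw hvq hGvq hH hσ,
    edgeSet_sup, edgeSet_edge_of_ne hvw.ne, Set.union_singleton, Set.ncard_insert_of_notMem hnew]

end Switching

section Recurrence

variable {V : Type*} [Fintype V] [DecidableEq V] {G H : SimpleGraph V}
  [DecidableRel H.Adj] {d e : ℕ}

lemma abs_card_filter_overlap_sub_le_of_not_adj {v w q : V}
    [DecidablePred (SwitchObstructed G H v w q)] (hvw : G.Adj v w) (hvq : v ≠ q)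
    (hGvq : ¬ G.Adj v q) (m : ℕ) :
    |(#{σ : Perm V | H.Adj (σ v) (σ w) ∧ overlap G H σ = m + 1} : ℝ) -
        #{σ : Perm V | H.Adj (σ v) (σ q) ∧ overlap G H σ = m}| ≤
      #{σ : Perm V | H.Adj (σ v) (σ q) ∧ SwitchObstructed G H v w q σ} := by
  rw [card_filter_adj_perm_and_eq_of_swap _ hvw.ne hvq]
  refine abs_card_filter_sub_card_filter_le fun σ _ hσ => and_congr_right fun hH => ?_
  rw [overlap_mul_swap hvw hvq hGvq hH fun h => hσ ⟨hH, h⟩, Nat.add_right_cancel_iff]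

lemma abs_card_filter_overlap_sub_le (hH : H.IsRegularOfDegree e) {v w q : V} (hvw : v ≠ w)
    (hvq : v ≠ q) (m k : ℕ) :
    |(#{σ : Perm V | H.Adj (σ v) (σ w) ∧ overlap G H σ = k} : ℝ) -
        #{σ : Perm V | H.Adj (σ v) (σ q) ∧ overlap G H σ = m}| ≤
      e * Fintype.card (Perm V) / (Fintype.card V - 1) := by
  have hbound {z : V} (hvz : v ≠ z) (k : ℕ) :
      (#{σ : Perm V | H.Adj (σ v) (σ z) ∧ overlap G H σ = k} : ℝ) ≤
        e * Fintype.card (Perm V) / (Fintype.card V - 1) := by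
    have hcard : 1 < Fintype.card V := Fintype.one_lt_card_iff.2 ⟨v, z, hvz⟩
    rw [le_div_iff₀' (by rw [sub_pos]; exact_mod_cast hcard), ← Nat.cast_one,
      ← Nat.cast_sub hcard.le]
    norm_cast
    refine le_trans ?_ (card_filter_adj_perm_le hH hvz)
    gcongr
    exact And.left
  exact abs_sub_le_of_nonneg_of_le (Nat.cast_nonneg _) (hbound hvw k) (Nat.cast_nonneg _)
    (hbound hvq m)

variable [DecidableRel G.Adj]

lemma abs_card_filter_overlap_sub_le_ite_add (hH : H.IsRegularOfDegree e)
    (hV : 3 < Fintype.card V) {v w q : V} [DecidablePred (SwitchObstructed G H v w q)]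
    (hvw : G.Adj v w) (hvq : v ≠ q) (m : ℕ) :
    |(#{σ : Perm V | H.Adj (σ v) (σ w) ∧ overlap G H σ = m + 1} : ℝ) -
        #{σ : Perm V | H.Adj (σ v) (σ q) ∧ overlap G H σ = m}| ≤
      (if G.Adj v q then e * Fintype.card (Perm V) / (Fintype.card V - 3 : ℝ) else 0) +
        #{σ : Perm V | H.Adj (σ v) (σ q) ∧ SwitchObstructed G H v w q σ} := by
  have hV' : (3 : ℝ) < Fintype.card V := by exact_mod_cast hV
  split_ifs with hGvq
  · refine (abs_card_filter_overlap_sub_le hH hvw.ne hvq m _).trans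
      (le_add_of_le_of_nonneg ?_ (Nat.cast_nonneg _))
    gcongr
    norm_num
  · rw [zero_add]
    exact abs_card_filter_overlap_sub_le_of_not_adj hvw hvq hGvq m

lemma card_filter_adj_perm_and_switchObstructed_le (hG : G.IsRegularOfDegree d)
    (hH : H.IsRegularOfDegree e) (v w q : V) [DecidablePred (SwitchObstructed G H v w q)] :
    (Fintype.card V - 3) * #{σ : Perm V | H.Adj (σ v) (σ q) ∧ SwitchObstructed G H v w q σ} ≤
      4 * d * e * #{σ : Perm V | H.Adj (σ v) (σ q)} := by
  let I : Finset (V × V) := {p ∈ {w, q} ×ˢ (G.neighborFinset w ∪ G.neighborFinset q) |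
    s(p.1, p.2) ≠ s(v, q)}
  have hI : #I ≤ 4 * d := calc
    #I ≤ #({w, q} : Finset V) * #(G.neighborFinset w ∪ G.neighborFinset q) :=
      (card_filter_le _ _).trans (card_product _ _).le
    _ ≤ 2 * (d + d) := Nat.mul_le_mul card_le_two <| (card_union_le _ _).trans <| by
      rw [card_neighborFinset_eq_degree, card_neighborFinset_eq_degree, hG w, hG q]
    _ = 4 * d := by ring
  have hcover : ({σ | H.Adj (σ v) (σ q) ∧ SwitchObstructed G H v w q σ} : Finset (Perm V)) ⊆
      I.biUnion fun p => {σ : Perm V | H.Adj (σ v) (σ q) ∧ H.Adj (σ p.1) (σ p.2)} := by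
    intro σ hσ
    obtain ⟨hvq, x, y, hx, hy, hne, hxy⟩ := (mem_filter.1 hσ).2
    exact mem_biUnion.2 ⟨(x, y), mem_filter.2 ⟨by simp [hx, hy], hne⟩, by simp [hvq, hxy]⟩
  calc (Fintype.card V - 3) *
        #{σ : Perm V | H.Adj (σ v) (σ q) ∧ SwitchObstructed G H v w q σ}
      ≤ (Fintype.card V - 3) *
          ∑ p ∈ I, #{σ : Perm V | H.Adj (σ v) (σ q) ∧ H.Adj (σ p.1) (σ p.2)} :=
        Nat.mul_le_mul_left _ ((card_le_card hcover).trans card_biUnion_le)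
    _ ≤ #I * (e * #{σ : Perm V | H.Adj (σ v) (σ q)}) := by
        rw [mul_sum]
        exact sum_le_card_nsmul _ _ _ fun p hp =>
          card_filter_adj_perm_and_adj_perm_le hH (mem_filter.1 hp).2
    _ ≤ 4 * d * e * #{σ : Perm V | H.Adj (σ v) (σ q)} := by
        rw [mul_assoc (4 * d)]
        gcongr

lemma sum_card_filter_adj_perm_and_switchObstructed_le (hG : G.IsRegularOfDegree d)
    (hH : H.IsRegularOfDegree e) (hV : 3 < Fintype.card V) (v w : V)
    [∀ q, DecidablePred (SwitchObstructed G H v w q)] :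
    ∑ q, (#{σ : Perm V | H.Adj (σ v) (σ q) ∧ SwitchObstructed G H v w q σ} : ℝ) ≤
      4 * d * e * (e * Fintype.card (Perm V)) / (Fintype.card V - 3) := by
  have hV' : (3 : ℝ) < Fintype.card V := by exact_mod_cast hV
  rw [le_div_iff₀' (by linarith), ← card_univ (α := Perm V)]
  have h := sum_le_sum fun q (_ : q ∈ univ) =>
    card_filter_adj_perm_and_switchObstructed_le hG hH v w q
  rw [← mul_sum, ← mul_sum, sum_card_filter_adj_perm hH] at h
  have h' := (Nat.cast_le (α := ℝ)).2 h
  push_cast [Nat.cast_sub hV.le] at h'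
  exact h'

lemma abs_card_filter_adj_and_overlap_sub_le (hG : G.IsRegularOfDegree d)
    (hH : H.IsRegularOfDegree e) (hV : 3 < Fintype.card V) {v w : V} (hvw : G.Adj v w) (m : ℕ) :
    |((Fintype.card V : ℝ) - 1) * #{σ : Perm V | H.Adj (σ v) (σ w) ∧ overlap G H σ = m + 1} -
        e * #{σ : Perm V | overlap G H σ = m}| ≤
      d * e * (1 + 4 * e) * Fintype.card (Perm V) / (Fintype.card V - 3) := by
  classical
  set N := (Fintype.card V : ℝ)
  set P := (Fintype.card (Perm V) : ℝ)
  let A : ℝ := #{σ : Perm V | H.Adj (σ v) (σ w) ∧ overlap G H σ = m + 1}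
  let B (q : V) : ℝ := #{σ : Perm V | H.Adj (σ v) (σ q) ∧ overlap G H σ = m}
  let O (q : V) : ℝ := #{σ : Perm V | H.Adj (σ v) (σ q) ∧ SwitchObstructed G H v w q σ}
  have hN : 3 < N := by simpa [N] using (Nat.cast_lt (α := ℝ)).2 hV
  have hA : ∑ _q ∈ univ.erase v, A = (N - 1) * A := by
    simp [N, card_erase_of_mem, Nat.cast_sub (show 1 ≤ Fintype.card V by omega)]
  have hB : ∑ q ∈ univ.erase v, B q = e * #{σ : Perm V | overlap G H σ = m} := by
    simp only [B]
    exact_mod_cast sum_erase_card_filter_adj_perm_and hH (overlap G H · = m) v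
  have hnear : ∑ q, (if G.Adj v q then e * P / (N - 3) else 0) = d * (e * P / (N - 3)) := by
    rw [← sum_filter, sum_const, ← neighborFinset_eq_filter, card_neighborFinset_eq_degree, hG v,
      nsmul_eq_mul]
  calc |(N - 1) * A - e * #{σ : Perm V | overlap G H σ = m}|
      = |∑ q ∈ univ.erase v, (A - B q)| := by rw [sum_sub_distrib, hA, hB]
    _ ≤ ∑ q ∈ univ.erase v, ((if G.Adj v q then e * P / (N - 3) else 0) + O q) :=
        (abs_sum_le_sum_abs _ _).trans (sum_le_sum fun q hq =>
          abs_card_filter_overlap_sub_le_ite_add hH hV hvw (ne_of_mem_erase hq).symm m)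
    _ ≤ ∑ q, ((if G.Adj v q then e * P / (N - 3) else 0) + O q) :=
        sum_le_sum_of_subset_of_nonneg (erase_subset _ _) fun q _ _ => by
          have : 0 < N - 3 := sub_pos.2 hN
          positivity
    _ ≤ d * (e * P / (N - 3)) + 4 * d * e * (e * P) / (N - 3) := by
        rw [sum_add_distrib, hnear]
        gcongr
        exact sum_card_filter_adj_perm_and_switchObstructed_le hG hH hV v w
    _ = d * e * (1 + 4 * e) * P / (N - 3) := by ring

end Recurrence

section FirstMoment

variable {V : Type*} [Fintype V] {G H : SimpleGraph V}
  [DecidableRel G.Adj] [DecidableRel H.Adj] {d e : ℕ}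

lemma two_mul_overlap (σ : Perm V) :
    2 * overlap G H σ = ∑ v, #{w ∈ G.neighborFinset v | H.Adj (σ v) (σ w)} := by
  classical
  calc 2 * overlap G H σ = ∑ v, (G ⊓ H.comap σ).degree v := by
        rw [sum_degrees_eq_twice_card_edges, overlap, ← edgeSet_inf,
          Set.ncard_eq_toFinset_card']
        congr!
    _ = ∑ v, #{w ∈ G.neighborFinset v | H.Adj (σ v) (σ w)} := by
        refine sum_congr rfl fun v _ => congrArg card ?_
        ext w
        simp

lemma two_mul_sum_overlap (D : Finset (Perm V)) :
    2 * ∑ σ ∈ D, overlap G H σ =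
      ∑ v, ∑ w ∈ G.neighborFinset v, #{σ ∈ D | H.Adj (σ v) (σ w)} := by
  simp only [mul_sum, two_mul_overlap]
  rw [sum_comm]
  exact sum_congr rfl fun v _ => sum_card_bipartiteAbove_eq_sum_card_bipartiteBelow _

variable [DecidableEq V]

lemma sum_overlap_le (hG : G.IsRegularOfDegree d) (hH : H.IsRegularOfDegree e)
    (hV : 1 < Fintype.card V) :
    ∑ σ : Perm V, overlap G H σ ≤ d * e * Fintype.card (Perm V) := by
  have hpos : 0 < 2 * (Fintype.card V - 1) := by omega
  refine Nat.le_of_mul_le_mul_left ?_ hpos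
  calc 2 * (Fintype.card V - 1) * ∑ σ : Perm V, overlap G H σ
      = ∑ v, ∑ w ∈ G.neighborFinset v,
          (Fintype.card V - 1) * #{σ : Perm V | H.Adj (σ v) (σ w)} := by
        rw [mul_right_comm, two_mul_sum_overlap, mul_comm]
        simp only [mul_sum]
    _ ≤ ∑ v, ∑ _w ∈ G.neighborFinset v, e * Fintype.card (Perm V) :=
        sum_le_sum fun v _ => sum_le_sum fun w hw =>
          card_filter_adj_perm_le hH ((G.mem_neighborFinset v w).1 hw).ne
    _ = Fintype.card V * (d * e * Fintype.card (Perm V)) := by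
        simp [hG.degree_eq, mul_assoc]
    _ ≤ 2 * (Fintype.card V - 1) * (d * e * Fintype.card (Perm V)) := by
        gcongr
        omega

lemma two_mul_succ_mul_card_filter_overlap (m : ℕ) :
    2 * (m + 1) * #{σ : Perm V | overlap G H σ = m + 1} =
      ∑ v, ∑ w ∈ G.neighborFinset v,
        #{σ : Perm V | H.Adj (σ v) (σ w) ∧ overlap G H σ = m + 1} := by
  have h := two_mul_sum_overlap (G := G) (H := H) {σ : Perm V | overlap G H σ = m + 1}
  rw [sum_congr rfl fun σ hσ => (mem_filter.1 hσ).2, sum_const, smul_eq_mul] at h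
  simp only [filter_filter] at h
  simp only [and_comm (b := overlap G H _ = m + 1), ← h]
  ring

lemma abs_card_filter_overlap_succ_sub_le (hG : G.IsRegularOfDegree d)
    (hH : H.IsRegularOfDegree e) (hV : 3 < Fintype.card V) (m : ℕ) :
    |2 * (m + 1) * ((Fintype.card V : ℝ) - 1) * #{σ : Perm V | overlap G H σ = m + 1} -
        Fintype.card V * (d * e) * #{σ : Perm V | overlap G H σ = m}| ≤
      Fintype.card V *
        (d ^ 2 * e * (1 + 4 * e) * Fintype.card (Perm V) / (Fintype.card V - 3)) := by
  set N := (Fintype.card V : ℝ)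
  set P := (Fintype.card (Perm V) : ℝ)
  let A (v w : V) : ℝ := #{σ : Perm V | H.Adj (σ v) (σ w) ∧ overlap G H σ = m + 1}
  let a : ℝ := #{σ : Perm V | overlap G H σ = m + 1}
  let b : ℝ := #{σ : Perm V | overlap G H σ = m}
  have hA : ∑ v, ∑ w ∈ G.neighborFinset v, (N - 1) * A v w = 2 * (m + 1) * (N - 1) * a := by
    have h : 2 * (m + 1) * a = ∑ v, ∑ w ∈ G.neighborFinset v, A v w := by
      simp only [A, a]
      exact_mod_cast two_mul_succ_mul_card_filter_overlap m
    simp only [← mul_sum, ← h]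
    ring
  have hb : ∑ v, ∑ _w ∈ G.neighborFinset v, e * b = N * (d * e) * b := by
    simp [N, hG.degree_eq, mul_assoc]
  calc |2 * (m + 1) * (N - 1) * a - N * (d * e) * b|
      = |∑ v, ∑ w ∈ G.neighborFinset v, ((N - 1) * A v w - e * b)| := by
        simp only [sum_sub_distrib]
        rw [hA, hb]
    _ ≤ ∑ v, ∑ _w ∈ G.neighborFinset v, d * e * (1 + 4 * e) * P / (N - 3) :=
        (abs_sum_le_sum_abs _ _).trans <| sum_le_sum fun v _ =>
          (abs_sum_le_sum_abs _ _).trans <| sum_le_sum fun w hw =>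
            abs_card_filter_adj_and_overlap_sub_le hG hH hV ((G.mem_neighborFinset v w).1 hw) m
    _ = N * (d * (d * e * (1 + 4 * e) * P / (N - 3))) := by
        simp [N, hG.degree_eq]
    _ = N * (d ^ 2 * e * (1 + 4 * e) * P / (N - 3)) := by ring

end FirstMoment

/-- The probability that `G` and `H.comap σ` have exactly `j` common edges, for a uniformly random
permutation `σ` of the vertices. -/
noncomputable def overlapProb {V : Type*} (G H : SimpleGraph V) (j : ℕ) : ℝ :=
  Nat.card {σ : Perm V // overlap G H σ = j} / Nat.card (Perm V)

section OverlapProb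

variable {V : Type*} {G H : SimpleGraph V} {d e : ℕ}

lemma overlapProb_nonneg (G H : SimpleGraph V) (j : ℕ) : 0 ≤ overlapProb G H j := by
  unfold overlapProb
  positivity

lemma overlapProb_eq [Fintype V] [DecidableEq V] (G H : SimpleGraph V) (j : ℕ) :
    overlapProb G H j = #{σ : Perm V | overlap G H σ = j} / Fintype.card (Perm V) := by
  rw [overlapProb, Nat.card_eq_fintype_card, Nat.card_eq_fintype_card, Fintype.card_subtype]

lemma sum_overlapProb_eq [Fintype V] [DecidableEq V] (G H : SimpleGraph V) (K : ℕ) :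
    ∑ k ∈ range K, overlapProb G H k =
      #{σ : Perm V | overlap G H σ < K} / Fintype.card (Perm V) := by
  rw [card_eq_sum_card_fiberwise (f := overlap G H) (t := range K) fun σ hσ => by simpa using hσ,
    Nat.cast_sum, sum_div]
  refine sum_congr rfl fun k hk => ?_
  rw [overlapProb_eq, filter_filter]
  congr! 4 with σ
  have := mem_range.1 hk
  grind

lemma sum_overlapProb_le_one [Finite V] (G H : SimpleGraph V) (K : ℕ) :
    ∑ k ∈ range K, overlapProb G H k ≤ 1 := by
  classical
  cases nonempty_fintype V
  rw [sum_overlapProb_eq]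
  exact div_le_one_of_le₀ (Nat.cast_le.2 (card_le_univ _)) (Nat.cast_nonneg _)

lemma overlapProb_le_one [Finite V] (G H : SimpleGraph V) (j : ℕ) : overlapProb G H j ≤ 1 :=
  (single_le_sum (fun k _ => overlapProb_nonneg G H k) (self_mem_range_succ j)).trans
    (sum_overlapProb_le_one G H (j + 1))

variable [Fintype V] [DecidableRel G.Adj] [DecidableRel H.Adj]

lemma one_sub_div_le_sum_overlapProb (hG : G.IsRegularOfDegree d) (hH : H.IsRegularOfDegree e)
    (hV : 1 < Fintype.card V) {K : ℕ} (hK : 0 < K) :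
    1 - d * e / K ≤ ∑ k ∈ range K, overlapProb G H k := by
  classical
  have hmarkov : K * #{σ : Perm V | ¬ overlap G H σ < K} ≤ d * e * Fintype.card (Perm V) := calc
    K * #{σ : Perm V | ¬ overlap G H σ < K}
      ≤ ∑ σ ∈ {σ : Perm V | ¬ overlap G H σ < K}, overlap G H σ := by
        rw [mul_comm, ← smul_eq_mul]
        exact card_nsmul_le_sum _ _ _ fun σ hσ => not_lt.1 (mem_filter.1 hσ).2
    _ ≤ ∑ σ : Perm V, overlap G H σ := sum_le_sum_of_subset (filter_subset _ _)
    _ ≤ d * e * Fintype.card (Perm V) := sum_overlap_le hG hH hV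
  have hsplit := card_filter_add_card_filter_not (s := (univ : Finset (Perm V)))
    (fun σ => overlap G H σ < K)
  rw [card_univ] at hsplit
  have hP : (0 : ℝ) < Fintype.card (Perm V) := by exact_mod_cast Fintype.card_pos
  have hK' : (0 : ℝ) < K := by exact_mod_cast hK
  rw [sum_overlapProb_eq, sub_le_comm, one_sub_div hP.ne', div_le_div_iff₀ hP hK', mul_comm]
  rw [← hsplit] at hmarkov ⊢
  push_cast [add_sub_cancel_left]
  exact_mod_cast hmarkov

lemma abs_mul_overlapProb_succ_sub_le (hG : G.IsRegularOfDegree d) (hH : H.IsRegularOfDegree e)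
    (hV : 3 < Fintype.card V) (m : ℕ) :
    |2 * (m + 1) * (Fintype.card V - 1) * overlapProb G H (m + 1) -
        Fintype.card V * (d * e) * overlapProb G H m| ≤
      Fintype.card V * (d ^ 2 * e * (1 + 4 * e) / (Fintype.card V - 3)) := by
  classical
  have hP : (0 : ℝ) < Fintype.card (Perm V) := by exact_mod_cast Fintype.card_pos
  rw [overlapProb_eq, overlapProb_eq, ← mul_le_mul_iff_left₀ hP]
  set N := (Fintype.card V : ℝ)
  set P := (Fintype.card (Perm V) : ℝ)
  set a := (#{σ : Perm V | overlap G H σ = m + 1} : ℝ)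
  set b := (#{σ : Perm V | overlap G H σ = m} : ℝ)
  calc |2 * (m + 1) * (N - 1) * (a / P) - N * (d * e) * (b / P)| * P
      = |(2 * (m + 1) * (N - 1) * (a / P) - N * (d * e) * (b / P)) * P| := by
        rw [abs_mul, abs_of_pos hP]
    _ = |2 * (m + 1) * (N - 1) * a - N * (d * e) * b| := by
        congr 1
        field_simp
    _ ≤ N * (d ^ 2 * e * (1 + 4 * e) * P / (N - 3)) :=
        abs_card_filter_overlap_succ_sub_le hG hH hV m
    _ = N * (d ^ 2 * e * (1 + 4 * e) / (N - 3)) * P := by ring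

lemma abs_succ_mul_overlapProb_succ_sub_le (hG : G.IsRegularOfDegree d)
    (hH : H.IsRegularOfDegree e) (hV : 3 < Fintype.card V) (m : ℕ) :
    |(m + 1) * overlapProb G H (m + 1) - d * e / 2 * overlapProb G H m| ≤
      (d ^ 2 * e * (1 + 4 * e) + d * e) / (Fintype.card V - 3) := by
  have hmain := abs_mul_overlapProb_succ_sub_le hG hH hV m
  have hN : (3 : ℝ) < Fintype.card V := by exact_mod_cast hV
  set N := (Fintype.card V : ℝ)
  set p := overlapProb G H m
  set p' := overlapProb G H (m + 1)
  set C := (d ^ 2 * e * (1 + 4 * e) : ℝ)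
  have hN1 : 0 < 2 * (N - 1) := by linarith
  have hN3 : 0 < N - 3 := sub_pos.2 hN
  have hrest : |d * e * p| ≤ d * e := by
    rw [abs_of_nonneg (mul_nonneg (by positivity) (overlapProb_nonneg G H m))]
    exact mul_le_of_le_one_right (by positivity) (overlapProb_le_one G H m)
  rw [← mul_le_mul_iff_right₀ hN1]
  calc 2 * (N - 1) * |(m + 1) * p' - d * e / 2 * p|
      = |2 * (N - 1) * ((m + 1) * p' - d * e / 2 * p)| := by rw [abs_mul, abs_of_pos hN1]
    _ = |2 * (m + 1) * (N - 1) * p' - N * (d * e) * p + d * e * p| := by ring_nf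
    _ ≤ N * (C / (N - 3)) + d * e := (abs_add_le _ _).trans (add_le_add hmain hrest)
    _ ≤ 2 * (N - 1) * ((C + d * e) / (N - 3)) := by
        rw [mul_div_assoc', div_add' _ _ _ hN3.ne', mul_div_assoc']
        gcongr
        have hC : 0 ≤ C := by positivity
        have hde : (0 : ℝ) ≤ d * e := by positivity
        nlinarith

end OverlapProb

section PoissonLimit

variable {ι : Type*} {l : Filter ι} {p : ι → ℕ → ℝ} {r : ℝ}

lemma tendsto_sub_mul_zero_of_recurrence
    (hrec : ∀ k : ℕ, Tendsto (fun i => (k + 1) * p i (k + 1) - r * p i k) l (nhds 0)) (k : ℕ) :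
    Tendsto (fun i => p i k - r ^ k / k.factorial * p i 0) l (nhds 0) := by
  induction k with
  | zero => simp [tendsto_const_nhds]
  | succ k ih =>
    have h := ((hrec k).add (ih.const_mul r)).const_mul ((k + 1 : ℝ)⁻¹)
    rw [mul_zero, add_zero, mul_zero] at h
    refine h.congr fun i => ?_
    have : (k + 1 : ℝ) ≠ 0 := by positivity
    rw [Nat.factorial_succ]
    push_cast
    field_simp
    ring

-- Summed over `k < K`, the recurrence makes `p i 0 * ∑ k < K, r ^ k / k!` asymptotic to
-- `∑ k < K, p i k`, which lies between `1 - ε` and `1`.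
lemma tendsto_exp_neg_of_recurrence (hsum : ∀ K, ∀ᶠ i in l, ∑ k ∈ Finset.range K, p i k ≤ 1)
    (htight : ∀ ε > 0, ∀ᶠ K in atTop, ∀ᶠ i in l, 1 - ε ≤ ∑ k ∈ Finset.range K, p i k)
    (hrec : ∀ k : ℕ, Tendsto (fun i => (k + 1) * p i (k + 1) - r * p i k) l (nhds 0)) :
    Tendsto (fun i => p i 0) l (nhds (Real.exp (-r))) := by
  let S (K : ℕ) : ℝ := ∑ k ∈ Finset.range K, r ^ k / k.factorial
  have hS : Tendsto S atTop (nhds (Real.exp r)) := by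
    rw [Real.exp_eq_exp_ℝ]
    exact (NormedSpace.expSeries_div_hasSum_exp r).tendsto_sum_nat
  have hpartial (K : ℕ) :
      Tendsto (fun i => ∑ k ∈ Finset.range K, p i k - S K * p i 0) l (nhds 0) := by
    have h := tendsto_finsetSum (Finset.range K)
      fun k _ => tendsto_sub_mul_zero_of_recurrence hrec k
    simpa only [Finset.sum_sub_distrib, ← Finset.sum_mul, Finset.sum_const_zero] using h
  have hS_pos : ∀ᶠ K in atTop, 0 < S K := hS.eventually_const_lt (Real.exp_pos r)
  refine tendsto_order.2 ⟨fun a ha => ?_, fun b hb => ?_⟩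
  · rw [Real.exp_neg, ← one_div, lt_div_iff₀ (Real.exp_pos r)] at ha
    obtain ⟨ε, hε, haε⟩ : ∃ ε > 0, a * Real.exp r < 1 - 2 * ε :=
      ⟨(1 - a * Real.exp r) / 3, by linarith, by linarith⟩
    have haS := (hS.const_mul a).eventually_lt_const haε
    obtain ⟨K, hK, haK, hK_tight⟩ := (hS_pos.and (haS.and (htight ε hε))).exists
    filter_upwards [hK_tight, (hpartial K).eventually_lt_const hε] with i hi hi'
    nlinarith
  · rw [Real.exp_neg, ← one_div, gt_iff_lt, div_lt_iff₀ (Real.exp_pos r)] at hb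
    obtain ⟨ε, hε, hbε⟩ : ∃ ε > 0, 1 + ε < b * Real.exp r :=
      ⟨(b * Real.exp r - 1) / 2, by linarith, by linarith⟩
    have hbS := (hS.const_mul b).eventually_const_lt hbε
    obtain ⟨K, hK, hbK⟩ := (hS_pos.and hbS).exists
    filter_upwards [hsum K, (hpartial K).eventually_const_lt (neg_lt_zero.2 hε)] with i hi hi'
    nlinarith

lemma tendsto_poisson_of_recurrence (hsum : ∀ K, ∀ᶠ i in l, ∑ k ∈ Finset.range K, p i k ≤ 1)
    (htight : ∀ ε > 0, ∀ᶠ K in atTop, ∀ᶠ i in l, 1 - ε ≤ ∑ k ∈ Finset.range K, p i k)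
    (hrec : ∀ k : ℕ, Tendsto (fun i => (k + 1) * p i (k + 1) - r * p i k) l (nhds 0)) (k : ℕ) :
    Tendsto (fun i => p i k) l (nhds (Real.exp (-r) * r ^ k / k.factorial)) := by
  have h := (tendsto_sub_mul_zero_of_recurrence hrec k).add
    ((tendsto_exp_neg_of_recurrence hsum htight hrec).const_mul (r ^ k / k.factorial))
  simp only [sub_add_cancel, zero_add] at h
  convert h using 2
  ring

end PoissonLimit

section Limit

open scoped BigOperators

lemma tendsto_expect_of_tendsto_comap_fst {ι : Type*} {l : Filter ι} {α : ι → Type*}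
    [∀ i, Fintype (α i)] {f : ∀ i, α i → ℝ} {c : ℝ} (hα : ∀ᶠ i in l, Nonempty (α i))
    (hf : Tendsto (fun x : Σ i, α i => f x.1 x.2) (comap Sigma.fst l) (nhds c)) :
    Tendsto (fun i => 𝔼 a, f i a) l (nhds c) := by
  rw [Metric.nhds_basis_closedBall.tendsto_right_iff] at hf ⊢
  intro ε hε
  filter_upwards [hα, eventually_comap.1 (hf ε hε)] with i hi hfi
  simp only [Real.closedBall_eq_Icc, Set.mem_Icc] at hfi ⊢
  exact ⟨le_expect univ_nonempty fun a _ => (hfi ⟨i, a⟩ rfl).1,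
    expect_le univ_nonempty fun a _ => (hfi ⟨i, a⟩ rfl).2⟩

lemma tendsto_overlapProb {ι : Type*} {l : Filter ι} {V : ι → Type*} [∀ i, Finite (V i)]
    (hV : Tendsto (fun i => Nat.card (V i)) l atTop) {G H : ∀ i, SimpleGraph (V i)} {d e : ℕ}
    (hG : ∀ i v, Nat.card ((G i).neighborSet v) = d)
    (hH : ∀ i v, Nat.card ((H i).neighborSet v) = e) (j : ℕ) :
    Tendsto (fun i => overlapProb (G i) (H i) j) l
      (nhds (Real.exp (-(d * e / 2)) * (d * e / 2) ^ j / j.factorial)) := by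
  classical
  have := fun i => Fintype.ofFinite (V i)
  replace hG (i : ι) : (G i).IsRegularOfDegree d := fun v => by
    rw [← hG i v, Nat.card_eq_fintype_card, card_neighborSet_eq_degree]
  replace hH (i : ι) : (H i).IsRegularOfDegree e := fun v => by
    rw [← hH i v, Nat.card_eq_fintype_card, card_neighborSet_eq_degree]
  simp only [Nat.card_eq_fintype_card] at hV
  refine tendsto_poisson_of_recurrence (fun K => .of_forall fun i => sum_overlapProb_le_one _ _ K)
    (fun ε hε => ?_) (fun k => ?_) j
  · have hK : ∀ᶠ K : ℕ in atTop, (d * e / K : ℝ) < ε :=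
      (tendsto_const_div_atTop_nhds_zero_nat _).eventually_lt_const hε
    filter_upwards [hK, eventually_gt_atTop 0] with K hK hK_pos
    filter_upwards [hV.eventually_gt_atTop 1] with i hi
    linarith [one_sub_div_le_sum_overlapProb (hG i) (hH i) hi hK_pos]
  · have hcard : Tendsto (fun i => (Fintype.card (V i) - 3 : ℝ)) l atTop :=
      tendsto_atTop_add_const_right _ _ (tendsto_natCast_atTop_atTop.comp hV)
    refine squeeze_zero_norm' ?_ (hcard.const_div_atTop (d ^ 2 * e * (1 + 4 * e) + d * e : ℝ))
    filter_upwards [hV.eventually_gt_atTop 3] with i hi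
    exact abs_succ_mul_overlapProb_succ_sub_le (hG i) (hH i) hi k

variable {V : Type*} {ℋ : Set (SimpleGraph V)}

lemma card_overlap_eq (𝒢 : Set (SimpleGraph V)) (hℋ : ∀ H ∈ ℋ, ∀ σ : Perm V, H.comap σ ∈ ℋ)
    (j : ℕ) (σ : Perm V) :
    Nat.card {p : 𝒢 × ℋ // overlap (p.1 : SimpleGraph V) p.2 σ = j} =
      Nat.card {p : SimpleGraph V × SimpleGraph V // p.1 ∈ 𝒢 ∧ p.2 ∈ ℋ ∧
        Nat.card (p.1.edgeSet ∩ p.2.edgeSet : Set (Sym2 V)) = j} := by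
  have hcomap (H : SimpleGraph V) : (H.comap σ.symm).comap σ = H := by ext; simp
  have hcomap_symm (H : SimpleGraph V) : (H.comap σ).comap σ.symm = H := by ext; simp
  exact Nat.card_congr {
    toFun p := ⟨(p.1.1, p.1.2.1.comap σ), p.1.1.2, hℋ _ p.1.2.2 σ, p.2⟩
    invFun p := ⟨(⟨p.1.1, p.2.1⟩, ⟨p.1.2.comap σ.symm, hℋ _ p.2.2.1 σ.symm⟩), by
      rw [overlap, hcomap]
      exact p.2.2.2⟩
    left_inv p := by simp [hcomap_symm]
    right_inv p := Subtype.ext (by simp [hcomap]) }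

lemma expect_overlapProb [Finite V] {𝒢 : Set (SimpleGraph V)} [Fintype 𝒢] [Fintype ℋ]
    (hℋ : ∀ H ∈ ℋ, ∀ σ : Perm V, H.comap σ ∈ ℋ) (j : ℕ) :
    𝔼 p : 𝒢 × ℋ, overlapProb (p.1 : SimpleGraph V) p.2 j =
      Nat.card {p : SimpleGraph V × SimpleGraph V // p.1 ∈ 𝒢 ∧ p.2 ∈ ℋ ∧
        Nat.card (p.1.edgeSet ∩ p.2.edgeSet : Set (Sym2 V)) = j} /
        (Nat.card 𝒢 * Nat.card ℋ) := by
  classical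
  cases nonempty_fintype V
  set M := Nat.card {p : SimpleGraph V × SimpleGraph V // p.1 ∈ 𝒢 ∧ p.2 ∈ ℋ ∧
    Nat.card (p.1.edgeSet ∩ p.2.edgeSet : Set (Sym2 V)) = j} with hM
  have hrelabel (σ : Perm V) : #{p : 𝒢 × ℋ | overlap p.1.1 p.2.1 σ = j} = M := by
    rw [hM, ← card_overlap_eq 𝒢 hℋ j σ, Nat.card_eq_fintype_card, Fintype.card_subtype]
  have hcount : ∑ p : 𝒢 × ℋ, #{σ : Perm V | overlap p.1.1 p.2.1 σ = j} =
      M * Fintype.card (Perm V) := by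
    have h := sum_card_bipartiteAbove_eq_sum_card_bipartiteBelow (s := univ) (t := univ)
      fun (p : 𝒢 × ℋ) (σ : Perm V) => overlap p.1.1 p.2.1 σ = j
    simp only [bipartiteAbove, bipartiteBelow, hrelabel, sum_const, card_univ, smul_eq_mul] at h
    rw [h, mul_comm]
  have hP : (Fintype.card (Perm V) : ℝ) ≠ 0 := Nat.cast_ne_zero.2 Fintype.card_ne_zero
  simp only [overlapProb_eq, Fintype.expect_eq_sum_div_card, ← sum_div]
  rw [← Nat.cast_sum, hcount, Nat.cast_mul, mul_div_cancel_right₀ _ hP, Fintype.card_prod,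
    Nat.cast_mul, Nat.card_eq_fintype_card, Nat.card_eq_fintype_card]

end Limit

end GraphOverlap

open GraphOverlap in
theorem ham_cycles_intersection_poisson_two_general {ι : Type*} {l : Filter ι} {V : ι → Type*}
    [∀ i, Finite (V i)] (hV : Tendsto (fun i => Nat.card (V i)) l atTop) {d e : ℕ}
    {𝒢 ℋ : ∀ i, Set (SimpleGraph (V i))}
    (h𝒢 : ∀ i, ∀ G ∈ 𝒢 i, ∀ v, Nat.card (G.neighborSet v) = d)
    (hℋ : ∀ i, ∀ H ∈ ℋ i, ∀ v, Nat.card (H.neighborSet v) = e)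
    (h𝒢_nonempty : ∀ᶠ i in l, (𝒢 i).Nonempty) (hℋ_nonempty : ∀ᶠ i in l, (ℋ i).Nonempty)
    (hℋ_comap : ∀ i, ∀ H ∈ ℋ i, ∀ σ : Equiv.Perm (V i), H.comap σ ∈ ℋ i) (j : ℕ) :
    Tendsto (fun i =>
        (Nat.card {p : SimpleGraph (V i) × SimpleGraph (V i) // p.1 ∈ 𝒢 i ∧ p.2 ∈ ℋ i ∧
            Nat.card (p.1.edgeSet ∩ p.2.edgeSet : Set (Sym2 (V i))) = j} : ℝ)
          / (Nat.card (𝒢 i) * Nat.card (ℋ i)))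
      l (nhds (Real.exp (-(d * e / 2)) * (d * e / 2) ^ j / j.factorial)) := by
  have := fun i => Fintype.ofFinite (𝒢 i)
  have := fun i => Fintype.ofFinite (ℋ i)
  simp only [← expect_overlapProb (hℋ_comap _)]
  refine tendsto_expect_of_tendsto_comap_fst (α := fun i => 𝒢 i × ℋ i) ?_ ?_
  · filter_upwards [h𝒢_nonempty, hℋ_nonempty] with i hi hi'
    exact ⟨⟨_, hi.some_mem⟩, ⟨_, hi'.some_mem⟩⟩
  · exact tendsto_overlapProb (hV.comp tendsto_comap) (fun x => h𝒢 x.1 _ x.2.1.2)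
      (fun x => hℋ x.1 _ x.2.2.2) j

lemma IsHamCycleGraph.comap {n : ℕ} {H : SimpleGraph (Fin n)} (hH : IsHamCycleGraph n H)
    (σ : Equiv.Perm (Fin n)) : IsHamCycleGraph n (H.comap σ) :=
  ⟨(Iso.comap σ H).connected_iff.2 hH.1, fun v =>
    (Nat.card_congr ((Iso.comap σ H).mapNeighborSet v)).trans (hH.2 (σ v))⟩

lemma exists_isHamCycleGraph {n : ℕ} (hn : 3 ≤ n) : ∃ H, IsHamCycleGraph n H := by
  obtain ⟨m, rfl⟩ := Nat.exists_eq_add_of_le' hn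
  refine ⟨cycleGraph (m + 3), cycleGraph_connected, fun v => ?_⟩
  rw [Nat.card_eq_fintype_card, card_neighborSet_eq_degree, cycleGraph_degree_three_le]

/-- Let `π, π'` be two independent uniformly random Hamiltonian cycles on
`K_n`. Then the number of common edges `|E(π) ∩ E(π')|` converges in
distribution to `Poisson(2)` as `n → ∞`: for every `j`,
`P(|E(π) ∩ E(π')| = j) → e^{-2} 2^j / j!`. -/
theorem ham_cycles_intersection_poisson_two (j : ℕ) :
    Tendsto (fun n : ℕ =>
        (Nat.card {p : SimpleGraph (Fin n) × SimpleGraph (Fin n) //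
            IsHamCycleGraph n p.1 ∧ IsHamCycleGraph n p.2 ∧
              Nat.card (p.1.edgeSet ∩ p.2.edgeSet : Set (Sym2 (Fin n))) = j} : ℝ)
          / (Nat.card {H : SimpleGraph (Fin n) // IsHamCycleGraph n H} : ℝ) ^ 2)
      atTop (nhds (Real.exp (-2) * 2 ^ j / (Nat.factorial j : ℝ))) := by
  have hregular (n : ℕ) (H : SimpleGraph (Fin n)) (hH : H ∈ {H | IsHamCycleGraph n H}) (v : Fin n) :
      Nat.card (H.neighborSet v) = 2 := hH.2 v
  have hnonempty : ∀ᶠ n in atTop, {H | IsHamCycleGraph n H}.Nonempty :=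
    (eventually_ge_atTop 3).mono fun _ => exists_isHamCycleGraph
  have hcard : Tendsto (fun n => Nat.card (Fin n)) atTop atTop :=
    tendsto_id.congr fun n => (Nat.card_fin n).symm
  have h := ham_cycles_intersection_poisson_two_general hcard hregular hregular hnonempty hnonempty
    (fun _ _ hH σ => hH.comap σ) j
  simpa only [sq, Set.mem_ofPred_eq, Set.coe_ofPred, Nat.cast_ofNat, mul_self_div_self] using h
end
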